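/- arXiv:0812.4266 — 2 statements merged into one kernel-verified Lean document; each statement's English description precedes it below -/
import Mathlib

section
/- Let n ≥ 2 and D := {x ∈ B^n : x_{n−1} + x_n ≥ 1}. Then the SSA map T maps D onto D: T '' D = D. -/
/-- Entry access with junk value `0` outside the index range: `ent x m = x_{m+1}`
(0-based coordinate `m`) for `m < n`, and `0` otherwise. -/
noncomputable def ent {n : ℕ} (x : Fin n → ℝ) (m : ℕ) : ℝ :=
  if h : m < n then x ⟨m, h⟩ else 0

/-- `B^n = {x ∈ ℝ^n : 1 ≥ x₁ ≥ x₂ ≥ ⋯ ≥ x_n ≥ 0}` (note that the stated antitonicity of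
the `0`-extended sequence `ent x` encodes both the ordering and `x_n ≥ 0`). -/
def Bset (n : ℕ) : Set (Fin n → ℝ) :=
  {x | ent x 0 ≤ 1 ∧ ∀ i j : ℕ, i ≤ j → ent x j ≤ ent x i}

/-- The index `j(x) = #{l ∈ {1,…,n} : x_l > 1 − x_n}` of the SSA. -/
noncomputable def ssaJ {n : ℕ} (x : Fin n → ℝ) : ℕ :=
  (Finset.univ.filter fun l : Fin n => 1 - ent x (n - 1) < x l).card

/-- The subtractive Selmer algorithm (SSA) map `T` on `B^n`:
if `j(x) = 0` then `Tx = (x₁/(1−x_n), …, x_n/(1−x_n))`, and if `1 ≤ j(x) ≤ n` then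
`Tx = (x₂/x₁, …, x_j/x₁, (1−x_n)/x₁, x_{j+1}/x₁, …, x_n/x₁)` with `(1−x_n)/x₁` in
position `j` (1-based positions; coordinate `i : Fin n` is position `i+1`). -/
noncomputable def ssaT {n : ℕ} (x : Fin n → ℝ) : Fin n → ℝ :=
  if ssaJ x = 0 then fun i => x i / (1 - ent x (n - 1))
  else fun i =>
    if (i : ℕ) + 1 < ssaJ x then ent x ((i : ℕ) + 1) / ent x 0
    else if (i : ℕ) + 1 = ssaJ x then (1 - ent x (n - 1)) / ent x 0
    else x i / ent x 0

/-! Put `c = 1 - x_n` and `x_{n+1} = 0`. Inserting `c` into the decreasing list `x_2, …, x_n` puts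
`max x_{i+1} (min x_i c)` at position `i`, so on all of `B^n`
`(T x)_i = max x_{i+1} (min x_i c) / max x_1 c`, with no case distinction on `j(x)`. Hence `T`
preserves `B^n`. On `D` one has `c ≤ x_{n-1} ≤ x_1`, so the last two entries of `T x` are
`max x_n c / x_1` and `min x_n c / x_1`, whose sum is `1 / x_1 ≥ 1`. Conversely, for `y ∈ D` the
point `(1, y_1, …, y_{n-2}, y_n) / (y_{n-1} + y_n)` lies in `D` and is mapped to `y`. -/

section Entries

variable {n : ℕ}

theorem ent_of_lt (x : Fin n → ℝ) {k : ℕ} (hk : k < n) : ent x k = x ⟨k, hk⟩ :=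
  dif_pos hk

theorem ent_of_le (x : Fin n → ℝ) {k : ℕ} (hk : n ≤ k) : ent x k = 0 :=
  dif_neg hk.not_gt

theorem ent_coe (x : Fin n → ℝ) (i : Fin n) : ent x i = x i :=
  ent_of_lt x i.isLt

theorem ext_ent {x y : Fin n → ℝ} (h : ∀ k, ent x k = ent y k) : x = y := by
  funext i
  rw [← ent_coe x, ← ent_coe y, h]

theorem ent_smul (a : ℝ) (x : Fin n → ℝ) (k : ℕ) : ent (a • x) k = a * ent x k := by
  unfold ent
  split_ifs <;> simp

theorem ent_vecCons_zero (a : ℝ) (x : Fin n → ℝ) : ent (Matrix.vecCons a x) 0 = a :=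
  ent_of_lt _ n.succ_pos

theorem ent_vecCons_succ (a : ℝ) (x : Fin n → ℝ) (k : ℕ) :
    ent (Matrix.vecCons a x) (k + 1) = ent x k := by
  unfold ent
  split_ifs
  exacts [rfl, by omega, by omega, rfl]

theorem ent_removeNth (p : Fin (n + 1)) (x : Fin (n + 1) → ℝ) (k : ℕ) :
    ent (p.removeNth x) k = if k < p then ent x k else ent x (k + 1) := by
  by_cases hk : k < n
  · rw [ent_of_lt _ hk, Fin.removeNth_apply, ← ent_coe x, Fin.succAbove]
    simp only [Fin.lt_def, Fin.val_castSucc, apply_ite Fin.val, Fin.val_succ, apply_ite (ent x)]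
  · rw [ent_of_le _ (not_lt.mp hk), if_neg (by omega), ent_of_le _ (by omega)]

end Entries

section OrderedCube

variable {n : ℕ} {x : Fin n → ℝ}

theorem antitone_ent (hx : x ∈ Bset n) : Antitone (ent x) :=
  fun _ _ hij => hx.2 _ _ hij

theorem ent_nonneg (hx : x ∈ Bset n) (k : ℕ) : 0 ≤ ent x k :=
  calc 0 = ent x (max k n) := (ent_of_le x (le_max_right k n)).symm
    _ ≤ ent x k := antitone_ent hx (le_max_left k n)

theorem ent_le_one (hx : x ∈ Bset n) (k : ℕ) : ent x k ≤ 1 :=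
  (antitone_ent hx k.zero_le).trans hx.1

theorem mem_Bset_iff : x ∈ Bset n ↔ Antitone x ∧ ∀ i, x i ∈ Set.Icc (0 : ℝ) 1 := by
  constructor
  · intro hx
    refine ⟨fun i j hij => ?_, fun i => ?_⟩
    · simpa only [ent_coe] using antitone_ent hx hij
    · exact ent_coe x i ▸ ⟨ent_nonneg hx i, ent_le_one hx i⟩
  · rintro ⟨hanti, hIcc⟩
    refine ⟨?_, fun i j hij => ?_⟩
    · unfold ent
      split_ifs with h
      exacts [(hIcc _).2, zero_le_one]
    · unfold ent
      split_ifs with hj hi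
      exacts [hanti hij, absurd (hij.trans_lt hj) hi, (hIcc _).1, le_rfl]

theorem smul_mem_Bset {a : ℝ} (ha₀ : 0 ≤ a) (ha₁ : a ≤ 1) (hx : x ∈ Bset n) : a • x ∈ Bset n := by
  rw [mem_Bset_iff] at hx ⊢
  refine ⟨fun i j hij => mul_le_mul_of_nonneg_left (hx.1 hij) ha₀, fun i => ?_⟩
  exact ⟨mul_nonneg ha₀ (hx.2 i).1, mul_le_one₀ ha₁ (hx.2 i).1 (hx.2 i).2⟩

theorem vecCons_one_mem_Bset (hx : x ∈ Bset n) : Matrix.vecCons 1 x ∈ Bset (n + 1) := by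
  refine ⟨(ent_vecCons_zero 1 x).le, antitone_nat_of_succ_le fun k => ?_⟩
  rw [ent_vecCons_succ]
  cases k with
  | zero => simpa only [ent_vecCons_zero] using ent_le_one hx 0
  | succ k => simpa only [ent_vecCons_succ] using antitone_ent hx k.le_succ

theorem removeNth_mem_Bset {y : Fin (n + 1) → ℝ} (p : Fin (n + 1)) (hy : y ∈ Bset (n + 1)) :
    p.removeNth y ∈ Bset n := by
  rw [mem_Bset_iff] at hy ⊢
  exact ⟨hy.1.comp_monotone p.strictMono_succAbove.monotone, fun i => hy.2 _⟩

end OrderedCube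

section Selmer

variable {n : ℕ} {x : Fin n → ℝ}

theorem lt_ssaJ_iff (hx : x ∈ Bset n) (k : ℕ) : k < ssaJ x ↔ 1 - ent x (n - 1) < ent x k := by
  by_cases hk : k < n
  · rw [ent_of_lt x hk]
    exact Tuple.lt_card_gt_iff_apply_gt_of_antitone (j := ⟨k, hk⟩) (mem_Bset_iff.mp hx).1
  · have hJ : ssaJ x ≤ n := (Finset.card_le_univ _).trans_eq (Fintype.card_fin n)
    have hlast : ent x (n - 1) ≤ 1 := ent_le_one hx _
    rw [ent_of_le x (not_lt.mp hk)]
    exact iff_of_false (by omega) (by linarith)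

theorem ent_ssaT (hx : x ∈ Bset n) (k : ℕ) :
    ent (ssaT x) k = max (ent x (k + 1)) (min (ent x k) (1 - ent x (n - 1))) /
      max (ent x 0) (1 - ent x (n - 1)) := by
  have hJ := lt_ssaJ_iff hx
  have hstep : ent x (k + 1) ≤ ent x k := antitone_ent hx k.le_succ
  have hc : 0 ≤ 1 - ent x (n - 1) := sub_nonneg.mpr (ent_le_one hx _)
  set c := 1 - ent x (n - 1) with hc_def
  rcases lt_or_ge k n with hk | hk
  · rw [ent_of_lt _ hk]
    simp only [ssaT, ite_apply, ← ent_of_lt x hk, ← hc_def]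
    split_ifs with hzero hlt heq
    · have h0 : ent x 0 ≤ c := not_lt.mp ((hJ 0).not.mp (by omega))
      have hkc : ent x k ≤ c := (antitone_ent hx k.zero_le).trans h0
      rw [max_eq_right h0, min_eq_left hkc, max_eq_right hstep]
    all_goals rw [max_eq_left ((hJ 0).mp (by omega)).le]
    · have hkc : c < ent x (k + 1) := (hJ _).mp hlt
      rw [max_eq_left ((min_le_right _ _).trans hkc.le)]
    · have hck : c < ent x k := (hJ _).mp (by omega)
      have hkc : ent x (k + 1) ≤ c := not_lt.mp ((hJ _).not.mp (by omega))
      rw [min_eq_right hck.le, max_eq_right hkc]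
    · have hkc : ent x k ≤ c := not_lt.mp ((hJ _).not.mp (by omega))
      rw [min_eq_left hkc, max_eq_right hstep]
  · rw [ent_of_le _ hk, ent_of_le x hk, ent_of_le x (hk.trans k.le_succ), min_eq_left hc,
      max_self, zero_div]

theorem ssaT_mapsTo_Bset (n : ℕ) : Set.MapsTo ssaT (Bset n) (Bset n) := by
  intro x hx
  have hden : 0 ≤ max (ent x 0) (1 - ent x (n - 1)) := le_max_of_le_left (ent_nonneg hx 0)
  refine ⟨?_, fun i j hij => ?_⟩
  · rw [ent_ssaT hx]
    refine div_le_one_of_le₀ (max_le_max (antitone_ent hx (Nat.zero_le _)) ?_) hden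
    exact min_le_right _ _
  · rw [ent_ssaT hx, ent_ssaT hx]
    refine div_le_div_of_nonneg_right (max_le_max ?_ (min_le_min_right _ ?_)) hden
    exacts [antitone_ent hx (Nat.succ_le_succ hij), antitone_ent hx hij]

end Selmer

section AbsorbingSet

variable {m : ℕ}

/-- The absorbing set `D` of the SSA in dimension `n = m + 2`, so that the last two of the 0-based
coordinates are `m` and `m + 1`. -/
def absorbingSet (m : ℕ) : Set (Fin (m + 2) → ℝ) :=
  {x | x ∈ Bset (m + 2) ∧ 1 ≤ ent x m + ent x (m + 1)}

theorem ent_ssaT_of_mem_absorbingSet {x : Fin (m + 2) → ℝ} (hx : x ∈ absorbingSet m) (k : ℕ) :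
    ent (ssaT x) k =
      max (ent x (k + 1)) (min (ent x k) (1 - ent x (m + 1))) / ent x 0 := by
  have h0 : ent x m ≤ ent x 0 := antitone_ent hx.1 m.zero_le
  have hc : 1 - ent x (m + 1) ≤ ent x 0 := by linarith [hx.2]
  rw [ent_ssaT hx.1, Nat.add_succ_sub_one, max_eq_left hc]

theorem ent_zero_pos_of_mem_absorbingSet {x : Fin (m + 2) → ℝ} (hx : x ∈ absorbingSet m) :
    0 < ent x 0 := by
  have hm : ent x m ≤ ent x 0 := antitone_ent hx.1 m.zero_le
  have hm' : ent x (m + 1) ≤ ent x 0 := antitone_ent hx.1 (m + 1).zero_le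
  linarith [hx.2]

theorem ent_ssaT_add_ent_ssaT {x : Fin (m + 2) → ℝ} (hx : x ∈ absorbingSet m) :
    ent (ssaT x) m + ent (ssaT x) (m + 1) = 1 / ent x 0 := by
  have hc : 1 - ent x (m + 1) ≤ ent x m := by linarith [hx.2]
  have hmin : 0 ≤ min (ent x (m + 1)) (1 - ent x (m + 1)) :=
    le_min (ent_nonneg hx.1 _) (sub_nonneg.mpr (ent_le_one hx.1 _))
  rw [ent_ssaT_of_mem_absorbingSet hx, ent_ssaT_of_mem_absorbingSet hx, min_eq_right hc,
    ent_of_le x (m + 1).succ.le_refl, max_eq_right hmin, ← add_div, max_add_min,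
    add_sub_cancel]

theorem ssaT_mapsTo_absorbingSet (m : ℕ) :
    Set.MapsTo ssaT (absorbingSet m) (absorbingSet m) := by
  intro x hx
  refine ⟨ssaT_mapsTo_Bset _ hx.1, ?_⟩
  rw [ent_ssaT_add_ent_ssaT hx]
  exact (one_le_div₀ (ent_zero_pos_of_mem_absorbingSet hx)).mpr hx.1.1

/-- The preimage `(1, y_1, …, y_{n-2}, y_n) / (y_{n-1} + y_n)` of `y ∈ D` under `T`, where
`n = m + 2`. The scale is forced: the last two entries of `T x` add up to `1 / x_1`. -/
noncomputable def ssaPreimage (y : Fin (m + 2) → ℝ) : Fin (m + 2) → ℝ :=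
  (ent y m + ent y (m + 1))⁻¹ • Matrix.vecCons 1 ((Fin.last m).castSucc.removeNth y)

theorem ent_ssaPreimage_zero (y : Fin (m + 2) → ℝ) :
    ent (ssaPreimage y) 0 = (ent y m + ent y (m + 1))⁻¹ := by
  rw [ssaPreimage, ent_smul, ent_vecCons_zero, mul_one]

theorem ent_ssaPreimage_succ (y : Fin (m + 2) → ℝ) (k : ℕ) :
    ent (ssaPreimage y) (k + 1) =
      (ent y m + ent y (m + 1))⁻¹ * if k < m then ent y k else ent y (k + 1) := by
  rw [ssaPreimage, ent_smul, ent_vecCons_succ, ent_removeNth, Fin.val_castSucc, Fin.val_last]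

variable {y : Fin (m + 2) → ℝ}

theorem ssaPreimage_mem_Bset (hy : y ∈ absorbingSet m) : ssaPreimage y ∈ Bset (m + 2) :=
  smul_mem_Bset (inv_nonneg.mpr (zero_le_one.trans hy.2)) (inv_le_one_of_one_le₀ hy.2)
    (vecCons_one_mem_Bset (removeNth_mem_Bset _ hy.1))

theorem one_sub_ent_ssaPreimage_last (hy : y ∈ absorbingSet m) :
    1 - ent (ssaPreimage y) (m + 1) = (ent y m + ent y (m + 1))⁻¹ * ent y m := by
  have hsum : ent y m + ent y (m + 1) ≠ 0 := (zero_lt_one.trans_le hy.2).ne'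
  rw [ent_ssaPreimage_succ, if_neg (lt_irrefl m)]
  field_simp
  ring

theorem mul_ent_le_ent_ssaPreimage (hy : y ∈ absorbingSet m) {k : ℕ} (hk : k ≤ m) :
    (ent y m + ent y (m + 1))⁻¹ * ent y m ≤ ent (ssaPreimage y) k := by
  have hscale : 0 ≤ (ent y m + ent y (m + 1))⁻¹ := inv_nonneg.mpr (zero_le_one.trans hy.2)
  cases k with
  | zero =>
    rw [ent_ssaPreimage_zero]
    exact mul_le_of_le_one_right hscale (ent_le_one hy.1 m)
  | succ k =>
    rw [ent_ssaPreimage_succ, if_pos (Nat.lt_of_succ_le hk)]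
    exact mul_le_mul_of_nonneg_left (antitone_ent hy.1 (Nat.le_of_succ_le hk)) hscale

theorem ssaPreimage_mem_absorbingSet (hy : y ∈ absorbingSet m) :
    ssaPreimage y ∈ absorbingSet m := by
  refine ⟨ssaPreimage_mem_Bset hy, ?_⟩
  linarith [one_sub_ent_ssaPreimage_last hy, mul_ent_le_ent_ssaPreimage hy le_rfl]

theorem ssaT_ssaPreimage (hy : y ∈ absorbingSet m) : ssaT (ssaPreimage y) = y := by
  have hanti := antitone_ent hy.1
  have hscale : 0 < (ent y m + ent y (m + 1))⁻¹ := inv_pos.mpr (zero_lt_one.trans_le hy.2)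
  refine ext_ent fun k => ?_
  rw [ent_ssaT_of_mem_absorbingSet (ssaPreimage_mem_absorbingSet hy),
    one_sub_ent_ssaPreimage_last hy, ent_ssaPreimage_zero, div_eq_iff hscale.ne',
    mul_comm (ent y k), ent_ssaPreimage_succ]
  rcases le_or_gt k m with hk | hk
  · rw [min_eq_right (mul_ent_le_ent_ssaPreimage hy hk), ← mul_max_of_nonneg _ _ hscale.le]
    split_ifs with hlt
    · rw [max_eq_left (hanti hk)]
    · obtain rfl : k = m := le_antisymm hk (not_lt.mp hlt)
      rw [max_eq_right (hanti k.le_succ)]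
  · obtain ⟨k, rfl⟩ := Nat.exists_eq_succ_of_ne_zero (Nat.ne_zero_of_lt hk)
    rw [ent_ssaPreimage_succ, if_neg (by omega), if_neg (by omega),
      ← mul_min_of_nonneg _ _ hscale.le, ← mul_max_of_nonneg _ _ hscale.le,
      min_eq_left (hanti hk.le), max_eq_right (hanti (Nat.le_succ _))]

theorem ssaT_surjOn_absorbingSet (m : ℕ) : Set.SurjOn ssaT (absorbingSet m) (absorbingSet m) :=
  fun y hy => ⟨ssaPreimage y, ssaPreimage_mem_absorbingSet hy, ssaT_ssaPreimage hy⟩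

end AbsorbingSet

/-- **The SSA maps `D` onto `D`.** For `n ≥ 2` and the absorbing set
`D = {x ∈ B^n : x_{n−1} + x_n ≥ 1}` (0-based coordinates `n−2` and `n−1`),
one has `T '' D = D`. -/
theorem ssa_image_absorbing_set (n : ℕ) (hn : 2 ≤ n) :
    ssaT '' {x : Fin n → ℝ | x ∈ Bset n ∧ 1 ≤ ent x (n - 2) + ent x (n - 1)}
      = {x : Fin n → ℝ | x ∈ Bset n ∧ 1 ≤ ent x (n - 2) + ent x (n - 1)} := by
  obtain ⟨m, rfl⟩ := Nat.exists_eq_add_of_le' hn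
  exact (ssaT_mapsTo_absorbingSet m).image_subset.antisymm (ssaT_surjOn_absorbingSet m)
end

section
/- Let x ∈ B^n have MSA orbit defined for all times, and suppose the MSA expansion of x is eventually periodic: there exist m ≥ 0 and p ≥ 1 with S^{m+p} x = S^m x. Then for every i ∈ {1,…,n}, the ratio (β^{(s)})_{i,n−1} / (β^{(s)})_{0,n−1} converges to x_i as s → ∞; i.e. the periodic multiplicative Selmer algorithm is weakly convergent. -/
open Matrix Filter

/-- The MSA digit `k = ⌊1/x_n⌋`. -/
noncomputable def msaDigit {n : ℕ} (x : Fin n → ℝ) : ℤ :=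
  ⌊(ent x (n - 1))⁻¹⌋

/-- The multiplicative Selmer algorithm (MSA) map
`S(x₁,…,x_n) = (x₂/x₁, …, x_n/x₁, (1 − k·x_n)/x₁)` with `k = ⌊1/x_n⌋`. -/
noncomputable def msaS {n : ℕ} (x : Fin n → ℝ) : Fin n → ℝ := fun i =>
  if (i : ℕ) + 1 < n then ent x ((i : ℕ) + 1) / ent x 0
  else (1 - (msaDigit x : ℝ) * ent x (n - 1)) / ent x 0

/-- The Selmer matrix `β(k)`: the `(n+1)×(n+1)` real matrix (rows and columns indexed by
`0,…,n`) whose only nonzero entries are `β(k)_{0,n−1} = k`, `β(k)_{0,n} = 1`, and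
`β(k)_{i,i−1} = 1` for `1 ≤ i ≤ n`. -/
noncomputable def selmerBeta (n : ℕ) (k : ℤ) : Matrix (Fin (n + 1)) (Fin (n + 1)) ℝ :=
  Matrix.of fun i j =>
    if (i : ℕ) = 0 ∧ (j : ℕ) = n - 1 then (k : ℝ)
    else if (i : ℕ) = 0 ∧ (j : ℕ) = n then 1
    else if (j : ℕ) + 1 = (i : ℕ) then 1 else 0

/-- `β^{(s)} = β(k₁)β(k₂)⋯β(k_s)` for the MSA digits `k_s = ⌊1/(S^{s−1}x)_n⌋` of `x`
(with `β^{(0)}` the identity matrix). -/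
noncomputable def msaBeta (n : ℕ) (x : Fin n → ℝ) (s : ℕ) :
    Matrix (Fin (n + 1)) (Fin (n + 1)) ℝ :=
  ((List.range s).map fun t => selmerBeta n (msaDigit (msaS^[t] x))).prod

/-!
In homogeneous coordinates the Selmer algorithm reads `X_s = c_s β(k_{s+1}) X_{s+1}`, where
`X_s = (1, S^s x)` and `c_s` is the first coordinate of `S^s x`, so with `v_s = (c_0 ⋯ c_{s-1}) X_s`
the positive vectors `v_s` satisfy `β(k_{s+1}) v_{s+1} = v_s`. Conjugating by the diagonal matrices
of the `v_s` turns the `β(k_s)` into row-stochastic matrices. Since `β(k_s)` dominates `β(1)`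
entrywise and `β(1)` is primitive, all products of a fixed number of these stochastic matrices have
entries bounded below as soon as the last coordinate of the orbit is bounded away from `0`; for
periodic orbits it is, as it takes finitely many values. Such products contract oscillation
geometrically, so the rows of their infinite product become equal, and undoing the conjugation gives
`β^{(s)}_{i,j} / β^{(s)}_{0,j} → (v_0)_i / (v_0)_0 = x_i`.
-/

/-! ### Eventually periodic orbits -/

lemma finite_range_iterate {α : Type*} {f : α → α} {x : α} {m p : ℕ} (hp : 0 < p)
    (h : f^[m + p] x = f^[m] x) : (Set.range fun s => f^[s] x).Finite := by
  have hper : Function.IsPeriodicPt f p (f^[m] x) := by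
    rw [Function.IsPeriodicPt, Function.IsFixedPt, ← Function.iterate_add_apply, add_comm, h]
  refine ((Set.finite_lt_nat (m + p)).image fun s => f^[s] x).subset ?_
  rintro _ ⟨s, rfl⟩
  rcases lt_or_ge s m with hs | hs
  · exact ⟨s, hs.trans_le (Nat.le_add_right m p), rfl⟩
  · obtain ⟨u, rfl⟩ := Nat.exists_eq_add_of_le' hs
    refine ⟨u % p + m, ?_, ?_⟩
    · rw [Set.mem_ofPred_eq, add_comm]; gcongr; exact Nat.mod_lt u hp
    · simp only [Function.iterate_add_apply, hper.iterate_mod_apply]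

lemma exists_pos_forall_le_of_iterate_eq {α : Type*} {f : α → α} {x : α} {m p : ℕ} (hp : 0 < p)
    (h : f^[m + p] x = f^[m] x) {g : α → ℝ} (hg : ∀ s, 0 < g (f^[s] x)) :
    ∃ η > 0, ∀ s, η ≤ g (f^[s] x) := by
  obtain ⟨_, ⟨t, rfl⟩, ht⟩ := Set.exists_min_image _ g (finite_range_iterate hp h) ⟨x, 0, rfl⟩
  exact ⟨_, hg t, fun s => ht _ ⟨s, rfl⟩⟩

/-! ### Products of consecutive matrices -/

section BlockProd

/-- The product `A t * A (t + 1) * ⋯ * A (t + s - 1)` of `s` consecutive terms of a sequence,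
starting at index `t`; thus `β^{(s)}` is the block product of the Selmer matrices with `t = 0`. -/
def blockProd {G : Type*} [Monoid G] (A : ℕ → G) (t s : ℕ) : G :=
  ((List.range' t s).map A).prod

variable {G : Type*} [Monoid G] (A : ℕ → G)

@[simp]
lemma blockProd_zero (t : ℕ) : blockProd A t 0 = 1 := by simp [blockProd]

lemma blockProd_add (t a b : ℕ) :
    blockProd A t (a + b) = blockProd A t a * blockProd A (t + a) b := by
  simp [blockProd, ← List.range'_append_1]

lemma blockProd_succ (t s : ℕ) : blockProd A t (s + 1) = blockProd A t s * A (t + s) := by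
  rw [blockProd_add]
  simp [blockProd]

variable {A}

lemma blockProd_mem {S : Submonoid G} (hA : ∀ s, A s ∈ S) (t s : ℕ) : blockProd A t s ∈ S :=
  S.list_prod_mem (List.forall_mem_map.2 fun u _ => hA u)

lemma pow_apply_le_blockProd {ι R : Type*} [Fintype ι] [DecidableEq ι] [Semiring R] [PartialOrder R]
    [IsOrderedRing R] {P : Matrix ι ι R} {M : ℕ → Matrix ι ι R} (hP : ∀ i j, 0 ≤ P i j)
    (hPM : ∀ s i j, P i j ≤ M s i j) (t s : ℕ) (i j : ι) : (P ^ s) i j ≤ blockProd M t s i j := by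
  induction s generalizing j with
  | zero => simp
  | succ s ih =>
    rw [pow_succ, blockProd_succ, mul_apply, mul_apply]
    exact Finset.sum_le_sum fun l _ => mul_le_mul (ih l) (hPM _ l j) (hP l j)
      ((pow_apply_nonneg hP s i l).trans (ih l))

end BlockProd

/-! ### Products of stochastic matrices -/

section Stochastic

variable {ι : Type*} [Fintype ι] [DecidableEq ι]

lemma le_mulVec_of_mem_rowStochastic {B : Matrix ι ι ℝ} (hB : B ∈ rowStochastic ℝ ι) {w : ι → ℝ}
    {c : ℝ} (hw : ∀ l, c ≤ w l) (i : ι) : c ≤ (B *ᵥ w) i := by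
  have h := nonneg_mulVec_of_mem_rowStochastic hB (x := w - c • 1) (by simpa using hw) i
  simpa [mulVec_sub, mulVec_smul, one_vecMul_of_mem_rowStochastic hB] using h

lemma mulVec_le_sub_of_mem_rowStochastic {B : Matrix ι ι ℝ} (hB : B ∈ rowStochastic ℝ ι)
    {w : ι → ℝ} {b : ℝ} (hw : ∀ l, w l ≤ b) (i a : ι) : (B *ᵥ w) i ≤ b - B i a * (b - w a) := by
  have hterm : B i a * (b - w a) ≤ ∑ l, B i l * (b - w l) :=
    Finset.single_le_sum (f := fun l => B i l * (b - w l))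
      (fun l _ => mul_nonneg (nonneg_of_mem_rowStochastic hB) (sub_nonneg.2 (hw l)))
      (Finset.mem_univ a)
  have hsum : ∑ l, B i l * (b - w l) = b - (B *ᵥ w) i := by
    simp only [mul_sub, Finset.sum_sub_distrib, ← Finset.sum_mul,
      sum_row_of_mem_rowStochastic hB, one_mul, mulVec, dotProduct]
  linarith

lemma mulVec_sub_mulVec_le_of_mem_rowStochastic {B : Matrix ι ι ℝ} (hB : B ∈ rowStochastic ℝ ι)
    {δ d : ℝ} (hδ : ∀ i j, δ ≤ B i j) {w : ι → ℝ} (hw : ∀ l l', w l - w l' ≤ d) (i i' : ι) :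
    (B *ᵥ w) i - (B *ᵥ w) i' ≤ (1 - δ) * d := by
  have : Nonempty ι := ⟨i⟩
  obtain ⟨a, ha⟩ := Finite.exists_min w
  obtain ⟨b, hb⟩ := Finite.exists_max w
  have hδ1 : δ ≤ 1 := (hδ i i).trans (le_one_of_mem_rowStochastic hB)
  calc (B *ᵥ w) i - (B *ᵥ w) i'
      ≤ w b - B i a * (w b - w a) - w a :=
        sub_le_sub (mulVec_le_sub_of_mem_rowStochastic hB hb i a)
          (le_mulVec_of_mem_rowStochastic hB ha i')
    _ = (1 - B i a) * (w b - w a) := by ring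
    _ ≤ (1 - δ) * d :=
        mul_le_mul (sub_le_sub_left (hδ i a) 1) (hw b a) (sub_nonneg.2 (ha b)) (sub_nonneg.2 hδ1)

variable {A : ℕ → Matrix ι ι ℝ} {N : ℕ} {δ : ℝ}

lemma blockProd_sub_blockProd_le (hA : ∀ s, A s ∈ rowStochastic ℝ ι)
    (hδ : ∀ t i j, δ ≤ blockProd A t N i j) (q r t : ℕ) (i i' j : ι) :
    blockProd A t (q * N + r) i j - blockProd A t (q * N + r) i' j ≤ (1 - δ) ^ q := by
  induction q generalizing t i i' with
  | zero =>
    have hmem := blockProd_mem hA t (0 * N + r)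
    rw [pow_zero]
    exact (sub_le_self _ (nonneg_of_mem_rowStochastic hmem)).trans
      (le_one_of_mem_rowStochastic hmem)
  | succ q ih =>
    rw [add_one_mul, add_right_comm, add_comm _ N, blockProd_add, pow_succ']
    exact mulVec_sub_mulVec_le_of_mem_rowStochastic (blockProd_mem hA t N) (hδ t)
      (fun l l' => ih (t + N) l l') i i'

lemma tendsto_blockProd_sub (hA : ∀ s, A s ∈ rowStochastic ℝ ι) (hN : 0 < N) (hδ0 : 0 < δ)
    (hδ : ∀ t i j, δ ≤ blockProd A t N i j) (t : ℕ) (i i' j : ι) :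
    Tendsto (fun s => blockProd A t s i j - blockProd A t s i' j) atTop (nhds 0) := by
  have hδ1 : δ ≤ 1 := (hδ 0 i i).trans (le_one_of_mem_rowStochastic (blockProd_mem hA 0 N))
  have hle (s : ℕ) (a b : ι) : blockProd A t s a j - blockProd A t s b j ≤ (1 - δ) ^ (s / N) := by
    simpa only [Nat.div_add_mod'] using blockProd_sub_blockProd_le hA hδ (s / N) (s % N) t a b j
  refine squeeze_zero_norm (fun s => ?_) <|
    (tendsto_pow_atTop_nhds_zero_of_lt_one (sub_nonneg.2 hδ1) (sub_lt_self 1 hδ0)).comp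
      (Nat.tendsto_div_const_atTop hN.ne')
  exact abs_le.2 ⟨neg_le.1 (by simpa using hle s i' i), hle s i i'⟩

lemma le_blockProd_of_le (hA : ∀ s, A s ∈ rowStochastic ℝ ι)
    (hδ : ∀ t i j, δ ≤ blockProd A t N i j) {s : ℕ} (hs : N ≤ s) (t : ℕ) (i j : ι) :
    δ ≤ blockProd A t s i j := by
  obtain ⟨u, rfl⟩ := Nat.exists_eq_add_of_le' hs
  rw [blockProd_add]
  exact le_mulVec_of_mem_rowStochastic (blockProd_mem hA t u) (fun l => hδ (t + u) l j) i

lemma tendsto_blockProd_div (hA : ∀ s, A s ∈ rowStochastic ℝ ι) (hN : 0 < N) (hδ0 : 0 < δ)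
    (hδ : ∀ t i j, δ ≤ blockProd A t N i j) (t : ℕ) (i i' j : ι) :
    Tendsto (fun s => blockProd A t s i j / blockProd A t s i' j) atTop (nhds 1) := by
  rw [tendsto_iff_norm_sub_tendsto_zero]
  have hlim := (tendsto_blockProd_sub hA hN hδ0 hδ t i i' j).norm.div_const δ
  rw [norm_zero, zero_div] at hlim
  refine squeeze_zero' (Eventually.of_forall fun _ => norm_nonneg _) ?_ hlim
  filter_upwards [eventually_ge_atTop N] with s hs
  have hle : δ ≤ blockProd A t s i' j := le_blockProd_of_le hA hδ hs t i' j
  have hpos : 0 < blockProd A t s i' j := hδ0.trans_le hle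
  rw [div_sub_one hpos.ne', norm_div, Real.norm_of_nonneg hpos.le]
  gcongr

end Stochastic

/-! ### Products of matrices dominating a primitive matrix -/

section DoobTransform

variable {ι : Type*}

/-- The Doob transform of the matrices `M s` by the vectors `v s`, that is
`diag (v s)⁻¹ * M s * diag (v (s + 1))`. It makes nonnegative matrices with
`M s *ᵥ v (s + 1) = v s` row stochastic. -/
def doobTransform {K : Type*} [Field K] (M : ℕ → Matrix ι ι K) (v : ℕ → ι → K) (s : ℕ) :
    Matrix ι ι K :=
  of fun i j => M s i j * v (s + 1) j / v s i

lemma pow_succ_mul_le_of_mul_le {v : ℕ → ι → ℝ} {c : ℝ} (hc : 0 ≤ c)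
    (hcv : ∀ s i j, c * v s i ≤ v (s + 1) j) (s t : ℕ) (i j : ι) :
    c ^ (s + 1) * v t i ≤ v (t + (s + 1)) j := by
  induction s generalizing j with
  | zero => simpa using hcv t i j
  | succ s ih =>
    calc c ^ (s + 2) * v t i = c * (c ^ (s + 1) * v t i) := by ring
      _ ≤ c * v (t + (s + 1)) i := by gcongr; exact ih i
      _ ≤ v (t + (s + 2)) j := hcv _ i j

variable [Fintype ι] [DecidableEq ι]

lemma blockProd_doobTransform {K : Type*} [Field K] (M : ℕ → Matrix ι ι K) {v : ℕ → ι → K}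
    (hv : ∀ s i, v s i ≠ 0) (t s : ℕ) (i j : ι) :
    blockProd (doobTransform M v) t s i j = blockProd M t s i j * v (t + s) j / v t i := by
  induction s generalizing j with
  | zero => by_cases hij : i = j <;> simp [hij, hv]
  | succ s ih =>
    simp only [blockProd_succ, mul_apply, Finset.sum_mul, Finset.sum_div]
    refine Finset.sum_congr rfl fun l _ => ?_
    have hl := hv (t + s) l
    rw [ih, doobTransform, of_apply, ← add_assoc]
    field_simp

lemma doobTransform_mem_rowStochastic {K : Type*} [Field K] [LinearOrder K] [IsStrictOrderedRing K]
    {M : ℕ → Matrix ι ι K} {v : ℕ → ι → K} (hM : ∀ s i j, 0 ≤ M s i j) (hv : ∀ s i, 0 < v s i)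
    (hMv : ∀ s, M s *ᵥ v (s + 1) = v s) (s : ℕ) : doobTransform M v s ∈ rowStochastic K ι := by
  refine mem_rowStochastic_iff_sum.2
    ⟨fun i j => div_nonneg (mul_nonneg (hM s i j) (hv _ j).le) (hv s i).le, fun i => ?_⟩
  simp only [doobTransform, of_apply, ← Finset.sum_div]
  exact (div_eq_one_iff_eq (hv s i).ne').2 (congrFun (hMv s) i)

lemma exists_pos_le_blockProd_doobTransform {P : Matrix ι ι ℝ} {M : ℕ → Matrix ι ι ℝ}
    {v : ℕ → ι → ℝ} {c : ℝ} (hP : P.IsPrimitive) (hPM : ∀ s i j, P i j ≤ M s i j)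
    (hv : ∀ s i, 0 < v s i) (hc : 0 < c) (hcv : ∀ s i j, c * v s i ≤ v (s + 1) j) :
    ∃ N > 0, ∃ δ > 0, ∀ t i j, δ ≤ blockProd (doobTransform M v) t N i j := by
  obtain ⟨N, hN, hpos⟩ := hP.exists_pos_pow
  obtain ⟨ε, hε, hεP⟩ : ∃ ε > 0, ∀ i j, ε ≤ (P ^ N) i j := by
    cases isEmpty_or_nonempty ι
    · exact ⟨1, one_pos, isEmptyElim⟩
    · obtain ⟨a, ha⟩ := Finite.exists_min fun a : ι × ι => (P ^ N) a.1 a.2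
      exact ⟨_, hpos a.1 a.2, fun i j => ha (i, j)⟩
  refine ⟨N, hN, ε * c ^ N, by positivity, fun t i j => ?_⟩
  have hratio : c ^ N * v t i ≤ v (t + N) j := by
    obtain ⟨s, rfl⟩ := Nat.exists_eq_add_one.2 hN
    exact pow_succ_mul_le_of_mul_le hc.le hcv s t i j
  have hentry : ε ≤ blockProd M t N i j :=
    (hεP i j).trans (pow_apply_le_blockProd hP.nonneg hPM t N i j)
  have hvt := hv t i
  rw [blockProd_doobTransform M (fun s i => (hv s i).ne'), le_div_iff₀ hvt, mul_assoc]
  exact mul_le_mul hentry hratio (by positivity) (hε.le.trans hentry)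

theorem tendsto_blockProd_div_of_isPrimitive {P : Matrix ι ι ℝ} {M : ℕ → Matrix ι ι ℝ}
    {v : ℕ → ι → ℝ} {c : ℝ} (hP : P.IsPrimitive) (hPM : ∀ s i j, P i j ≤ M s i j)
    (hv : ∀ s i, 0 < v s i) (hMv : ∀ s, M s *ᵥ v (s + 1) = v s) (hc : 0 < c)
    (hcv : ∀ s i j, c * v s i ≤ v (s + 1) j) (t : ℕ) (i i' j : ι) :
    Tendsto (fun s => blockProd M t s i j / blockProd M t s i' j) atTop
      (nhds (v t i / v t i')) := by
  obtain ⟨N, hN, δ, hδ0, hδ⟩ := exists_pos_le_blockProd_doobTransform hP hPM hv hc hcv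
  have hstoch : ∀ s, doobTransform M v s ∈ rowStochastic ℝ ι :=
    doobTransform_mem_rowStochastic (fun s i j => (hP.nonneg i j).trans (hPM s i j)) hv hMv
  have hlim := (tendsto_blockProd_div hstoch hN hδ0 hδ t i i' j).const_mul (v t i / v t i')
  rw [mul_one] at hlim
  refine hlim.congr fun s => ?_
  have hi := hv t i
  have hi' := hv t i'
  have hj := hv (t + s) j
  rw [blockProd_doobTransform M (fun s i => (hv s i).ne'),
    blockProd_doobTransform M (fun s i => (hv s i).ne')]
  field_simp

end DoobTransform

/-! ### Selmer matrices -/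

section SelmerMatrix

variable {n : ℕ}

lemma selmerBeta_zero_dotProduct (k : ℤ) (v : Fin (n + 2) → ℝ) :
    selmerBeta (n + 1) k 0 ⬝ᵥ v = k * v (Fin.last n).castSucc + v (Fin.last (n + 1)) := by
  have hrow : selmerBeta (n + 1) k 0 =
      Pi.single (Fin.last n).castSucc (k : ℝ) + Pi.single (Fin.last (n + 1)) 1 := by
    ext j
    simp only [selmerBeta, of_apply, Pi.add_apply, Pi.single_apply, Fin.ext_iff, Fin.val_zero,
      Fin.val_castSucc, Fin.val_last, Nat.add_sub_cancel, true_and, Nat.add_one_ne_zero, if_false]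
    split_ifs <;> first | omega | simp
  rw [hrow, add_dotProduct, single_dotProduct, single_dotProduct, one_mul]

lemma selmerBeta_succ_dotProduct (k : ℤ) (i : Fin (n + 1)) (v : Fin (n + 2) → ℝ) :
    selmerBeta (n + 1) k i.succ ⬝ᵥ v = v i.castSucc := by
  have hrow : selmerBeta (n + 1) k i.succ = Pi.single i.castSucc 1 := by
    ext j
    simp only [selmerBeta, of_apply, Pi.single_apply, Fin.ext_iff, Fin.val_succ, Fin.val_castSucc,
      Nat.add_one_ne_zero, false_and, if_false, Nat.add_right_cancel_iff]
  rw [hrow, single_dotProduct, one_mul]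

lemma selmerBeta_nonneg {k : ℤ} (hk : 0 ≤ k) (i j : Fin (n + 1)) : 0 ≤ selmerBeta n k i j := by
  simp only [selmerBeta, of_apply]
  split_ifs <;> simp [hk]

lemma selmerBeta_mono {k l : ℤ} (hkl : k ≤ l) (i j : Fin (n + 1)) :
    selmerBeta n k i j ≤ selmerBeta n l i j := by
  simp only [selmerBeta, of_apply]
  split_ifs <;> simp [hkl]

lemma selmerBeta_pow_add_apply (k : ℤ) {i i' : Fin (n + 2)} {d : ℕ} (h : (i : ℕ) = i' + d) (a : ℕ)
    (j : Fin (n + 2)) :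
    (selmerBeta (n + 1) k ^ (d + a)) i j = (selmerBeta (n + 1) k ^ a) i' j := by
  induction d generalizing i with
  | zero => rw [zero_add, Fin.ext h]
  | succ d ih =>
    obtain ⟨l, rfl⟩ := Fin.exists_succ_eq.2 (show i ≠ 0 by rintro rfl; simp at h)
    rw [add_right_comm d 1 a, pow_succ', mul_apply', selmerBeta_succ_dotProduct]
    exact ih (by simp only [Fin.val_succ, Fin.val_castSucc] at h ⊢; omega)

lemma selmerBeta_pow_succ_apply_zero (k : ℤ) (a : ℕ) (j : Fin (n + 2)) :
    (selmerBeta (n + 1) k ^ (a + 1)) 0 j =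
      k * (selmerBeta (n + 1) k ^ (a + 1)) (Fin.last (n + 1)) j
        + (selmerBeta (n + 1) k ^ a) (Fin.last (n + 1)) j := by
  rw [add_comm a 1, selmerBeta_pow_add_apply k (i := Fin.last (n + 1))
    (i' := (Fin.last n).castSucc) (by simp), add_comm 1 a, pow_succ', mul_apply',
    selmerBeta_zero_dotProduct]

-- The Cayley–Hamilton relation for the characteristic polynomial `X ^ (n + 2) - k X - 1`.
lemma selmerBeta_pow_add_two (k : ℤ) :
    selmerBeta (n + 1) k ^ (n + 2) = (k : ℝ) • selmerBeta (n + 1) k + 1 := by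
  ext i j
  have hrow (a : ℕ) : (selmerBeta (n + 1) k ^ (n + 1 - i + a)) (Fin.last (n + 1)) j =
      (selmerBeta (n + 1) k ^ a) i j :=
    selmerBeta_pow_add_apply k (by simp; omega) a j
  have hexp : n + 2 = i + (n + 1 - i + 1) := by omega
  calc (selmerBeta (n + 1) k ^ (n + 2)) i j
      = (selmerBeta (n + 1) k ^ (n + 1 - i + 1)) 0 j := by
        simpa only [← hexp] using
          selmerBeta_pow_add_apply k (i := i) (i' := 0) (d := i) (by simp) (n + 1 - i + 1) j
    _ = ((k : ℝ) • selmerBeta (n + 1) k + 1) i j := by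
        rw [selmerBeta_pow_succ_apply_zero, hrow 1, ← add_zero (n + 1 - (i : ℕ)), hrow 0]
        simp

lemma exists_selmerBeta_pow_apply_pos {k : ℤ} (hk : 0 ≤ k) (i j : Fin (n + 2)) :
    ∃ a < n + 2, 0 < (selmerBeta (n + 1) k ^ a) i j := by
  have hdiag {i : Fin (n + 2)} (hji : j ≤ i) : (selmerBeta (n + 1) k ^ (i - j : ℕ)) i j = 1 := by
    rw [← add_zero (i - j : ℕ), selmerBeta_pow_add_apply k (i' := j) (by omega), pow_zero,
      one_apply_eq]
  rcases le_or_gt j i with hji | hij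
  · exact ⟨i - j, by omega, by simp [hdiag hji]⟩
  · refine ⟨i + (n + 1 - j + 1), by omega, ?_⟩
    rw [selmerBeta_pow_add_apply k (i' := 0) (by simp), selmerBeta_pow_succ_apply_zero]
    refine add_pos_of_nonneg_of_pos (mul_nonneg (Int.cast_nonneg hk)
      (pow_apply_nonneg (selmerBeta_nonneg hk) _ _ j)) ?_
    exact (hdiag (Fin.le_last j)).symm ▸ one_pos

lemma selmerBeta_isPrimitive {k : ℤ} (hk : 0 < k) : (selmerBeta (n + 1) k).IsPrimitive := by
  have hnonneg := selmerBeta_nonneg (n := n + 1) hk.le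
  refine ⟨hnonneg, (n + 2) * (n + 1), by positivity, fun i j => ?_⟩
  obtain ⟨a, ha, hpos⟩ := exists_selmerBeta_pow_apply_pos hk.le i j
  -- Cayley–Hamilton turns `β ^ ((n + 2) * (n + 1))` into `(k β + 1) ^ (n + 1)`.
  have hexpand : (selmerBeta (n + 1) k ^ ((n + 2) * (n + 1))) i j =
      ∑ b ∈ Finset.range (n + 2),
        (n + 1).choose b * ((k : ℝ) ^ b * (selmerBeta (n + 1) k ^ b) i j) := by
    rw [pow_mul, selmerBeta_pow_add_two, (Commute.one_right _).add_pow, Matrix.sum_apply]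
    refine Finset.sum_congr rfl fun b _ => ?_
    rw [one_pow, mul_one, ← nsmul_eq_mul', smul_pow, Matrix.smul_apply, Matrix.smul_apply,
      nsmul_eq_mul, smul_eq_mul]
  rw [hexpand]
  have : (0 : ℝ) < k := Int.cast_pos.2 hk
  refine Finset.sum_pos' (fun b _ => ?_) ⟨a, Finset.mem_range.2 ha, ?_⟩
  · have := pow_apply_nonneg hnonneg b i j
    positivity
  · have := Nat.choose_pos (Nat.le_of_lt_succ ha)
    positivity

end SelmerMatrix

/-! ### The orbit of the multiplicative Selmer algorithm -/

section Orbit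

variable {n : ℕ} {y : Fin (n + 1) → ℝ}

@[simp]
lemma ent_val {n : ℕ} (y : Fin n → ℝ) (i : Fin n) : ent y i = y i := by simp [ent]

@[simp]
lemma ent_zero (y : Fin (n + 1) → ℝ) : ent y 0 = y 0 := ent_val y 0

@[simp]
lemma ent_last (y : Fin (n + 1) → ℝ) : ent y n = y (Fin.last n) := ent_val y (Fin.last n)

lemma mem_Bset_iff_s11 : y ∈ Bset (n + 1) ↔ y 0 ≤ 1 ∧ Antitone y ∧ 0 ≤ y (Fin.last n) := by
  refine and_congr (by rw [ent_zero]) ⟨fun h => ⟨fun i j hij => ?_, ?_⟩, fun h i j hij => ?_⟩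
  · simpa using h i j hij
  · rw [← ent_last y]
    simpa [ent] using h n (n + 1) n.le_succ
  · unfold ent
    split_ifs with hj hi hi
    · exact h.1 hij
    · omega
    · exact h.2.trans (h.1 (Fin.le_last _))
    · exact le_rfl

lemma msaS_castSucc (y : Fin (n + 1) → ℝ) (i : Fin n) :
    msaS y i.castSucc = y i.succ / y 0 := by
  simp [msaS, ← ent_val y i.succ]

lemma msaS_last (y : Fin (n + 1) → ℝ) :
    msaS y (Fin.last n) = (1 - msaDigit y * y (Fin.last n)) / y 0 := by
  simp [msaS]

lemma msaDigit_mul_le_one (hy : 0 < y (Fin.last n)) : msaDigit y * y (Fin.last n) ≤ 1 := by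
  rw [← le_div_iff₀ hy, one_div]
  simpa [msaDigit] using Int.floor_le (y (Fin.last n))⁻¹

lemma one_sub_msaDigit_mul_le (hy : 0 < y (Fin.last n)) :
    1 - msaDigit y * y (Fin.last n) ≤ y (Fin.last n) := by
  rw [sub_le_iff_le_add, ← one_add_mul, ← div_le_iff₀ hy, one_div, add_comm]
  simpa [msaDigit] using (Int.lt_floor_add_one (y (Fin.last n))⁻¹).le

lemma one_le_msaDigit (hy : 0 < y (Fin.last n)) (hy1 : y (Fin.last n) ≤ 1) : 1 ≤ msaDigit y := by
  simpa [msaDigit, Int.le_floor] using (one_le_inv₀ hy).2 hy1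

lemma mem_Icc_of_mem_Bset (h : y ∈ Bset (n + 1)) (i : Fin (n + 1)) :
    y i ∈ Set.Icc (y (Fin.last n)) 1 :=
  have ⟨h1, hanti, _⟩ := mem_Bset_iff_s11.1 h
  ⟨hanti (Fin.le_last i), (hanti (Fin.zero_le i)).trans h1⟩

lemma vecCons_one_mem_Icc_of_mem_Bset (h : y ∈ Bset (n + 1)) (i : Fin (n + 2)) :
    vecCons 1 y i ∈ Set.Icc (y (Fin.last n)) 1 := by
  cases i using Fin.cases with
  | zero => exact ⟨(mem_Icc_of_mem_Bset h _).2, le_rfl⟩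
  | succ i => exact mem_Icc_of_mem_Bset h i

lemma apply_zero_pos_of_mem_Bset (h : y ∈ Bset (n + 1)) (hy : 0 < y (Fin.last n)) : 0 < y 0 :=
  hy.trans_le (mem_Icc_of_mem_Bset h 0).1

lemma msaS_le_div (h : y ∈ Bset (n + 1)) (hy : 0 < y (Fin.last n)) (i : Fin (n + 1)) :
    msaS y i ≤ y i / y 0 := by
  have h0 := apply_zero_pos_of_mem_Bset h hy
  cases i using Fin.lastCases with
  | last => rw [msaS_last]; gcongr; exact one_sub_msaDigit_mul_le hy
  | cast i => rw [msaS_castSucc]; gcongr; exact (mem_Bset_iff_s11.1 h).2.1 i.castSucc_lt_succ.le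

lemma msaS_mem_Bset (h : y ∈ Bset (n + 1)) (hy : 0 < y (Fin.last n)) : msaS y ∈ Bset (n + 1) := by
  have h0 := apply_zero_pos_of_mem_Bset h hy
  refine mem_Bset_iff_s11.2 ⟨?_, Fin.antitone_iff_succ_le.2 fun i => ?_, ?_⟩
  · simpa [h0.ne'] using msaS_le_div h hy 0
  · rw [msaS_castSucc]
    exact msaS_le_div h hy i.succ
  · rw [msaS_last]
    exact div_nonneg (sub_nonneg.2 (msaDigit_mul_le_one hy)) h0.le

lemma iterate_msaS_mem_Bset (h : y ∈ Bset (n + 1)) (hy : ∀ s, 0 < (msaS^[s] y) (Fin.last n))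
    (s : ℕ) : msaS^[s] y ∈ Bset (n + 1) := by
  induction s with
  | zero => exact h
  | succ s ih => rw [Function.iterate_succ_apply']; exact msaS_mem_Bset ih (hy s)

lemma vecCons_one_msaS_castSucc (h0 : y 0 ≠ 0) (i : Fin (n + 1)) :
    vecCons 1 (msaS y) i.castSucc = y i / y 0 := by
  cases i using Fin.cases with
  | zero => simp [h0]
  | succ i => rw [← Fin.succ_castSucc, cons_val_succ, msaS_castSucc]

lemma selmerBeta_mulVec_vecCons_msaS (h0 : y 0 ≠ 0) :
    selmerBeta (n + 1) (msaDigit y) *ᵥ vecCons 1 (msaS y) = (y 0)⁻¹ • vecCons 1 y := by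
  ext i
  rw [mulVec]
  cases i using Fin.cases with
  | zero =>
    rw [selmerBeta_zero_dotProduct, vecCons_one_msaS_castSucc h0, ← Fin.succ_last, cons_val_succ,
      msaS_last, Pi.smul_apply, cons_val_zero, smul_eq_mul]
    ring
  | succ i =>
    rw [selmerBeta_succ_dotProduct, vecCons_one_msaS_castSucc h0, Pi.smul_apply, cons_val_succ,
      smul_eq_mul, div_eq_inv_mul]

/-- The homogeneous coordinates of the `s`-th orbit point `S^s x`, scaled by the first coordinates
of the earlier orbit points so that `β(k_{s+1})` maps the vector of index `s + 1` to that of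
index `s`. -/
noncomputable def scaledOrbit (x : Fin (n + 1) → ℝ) (s : ℕ) : Fin (n + 2) → ℝ :=
  (∏ t ∈ Finset.range s, (msaS^[t] x) 0) • vecCons 1 (msaS^[s] x)

lemma selmerBeta_mulVec_scaledOrbit {x : Fin (n + 1) → ℝ} {s : ℕ} (h0 : (msaS^[s] x) 0 ≠ 0) :
    selmerBeta (n + 1) (msaDigit (msaS^[s] x)) *ᵥ scaledOrbit x (s + 1) = scaledOrbit x s := by
  rw [scaledOrbit, scaledOrbit, mulVec_smul, Function.iterate_succ_apply',
    selmerBeta_mulVec_vecCons_msaS h0, smul_smul, Finset.prod_range_succ, mul_inv_cancel_right₀ h0]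

lemma scaledOrbit_pos {x : Fin (n + 1) → ℝ} (hx : x ∈ Bset (n + 1))
    (hpos : ∀ s, 0 < (msaS^[s] x) (Fin.last n)) (s : ℕ) (i : Fin (n + 2)) :
    0 < scaledOrbit x s i := by
  have hB := iterate_msaS_mem_Bset hx hpos
  exact mul_pos (Finset.prod_pos fun t _ => apply_zero_pos_of_mem_Bset (hB t) (hpos t))
    ((hpos s).trans_le (vecCons_one_mem_Icc_of_mem_Bset (hB s) i).1)

lemma sq_mul_scaledOrbit_le {x : Fin (n + 1) → ℝ} (hx : x ∈ Bset (n + 1)) {η : ℝ} (hη : 0 < η)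
    (hle : ∀ s, η ≤ (msaS^[s] x) (Fin.last n)) (s : ℕ) (i j : Fin (n + 2)) :
    η ^ 2 * scaledOrbit x s i ≤ scaledOrbit x (s + 1) j := by
  have hpos (s) : 0 < (msaS^[s] x) (Fin.last n) := hη.trans_le (hle s)
  have hB := iterate_msaS_mem_Bset hx hpos
  have hcoord : vecCons 1 (msaS^[s] x) i ≤ 1 := (vecCons_one_mem_Icc_of_mem_Bset (hB s) i).2
  have hcoord' : η ≤ vecCons 1 (msaS^[s + 1] x) j :=
    (hle (s + 1)).trans (vecCons_one_mem_Icc_of_mem_Bset (hB (s + 1)) j).1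
  have hfirst : η ≤ (msaS^[s] x) 0 := (hle s).trans (mem_Icc_of_mem_Bset (hB s) 0).1
  have hprod : 0 ≤ ∏ t ∈ Finset.range s, (msaS^[t] x) 0 :=
    Finset.prod_nonneg fun t _ => (apply_zero_pos_of_mem_Bset (hB t) (hpos t)).le
  calc η ^ 2 * scaledOrbit x s i
      = (∏ t ∈ Finset.range s, (msaS^[t] x) 0) * (η * η * vecCons 1 (msaS^[s] x) i) := by
        rw [scaledOrbit, Pi.smul_apply, smul_eq_mul]
        ring
    _ ≤ (∏ t ∈ Finset.range s, (msaS^[t] x) 0) *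
          ((msaS^[s] x) 0 * vecCons 1 (msaS^[s + 1] x) j) := by
        refine mul_le_mul_of_nonneg_left ?_ hprod
        exact (mul_le_of_le_one_right (by positivity) hcoord).trans
          (mul_le_mul hfirst hcoord' hη.le (hη.le.trans hfirst))
    _ = scaledOrbit x (s + 1) j := by
        rw [scaledOrbit, Pi.smul_apply, smul_eq_mul, Finset.prod_range_succ, mul_assoc]

end Orbit

lemma msaBeta_eq_blockProd {n : ℕ} (x : Fin n → ℝ) (s : ℕ) :
    msaBeta n x s = blockProd (fun t => selmerBeta n (msaDigit (msaS^[t] x))) 0 s := by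
  rw [msaBeta, blockProd, List.range_eq_range']

theorem msa_periodic_weak_convergence_general {n : ℕ} {x : Fin n → ℝ} (hx : x ∈ Bset n) {η : ℝ}
    (hη : 0 < η) (hle : ∀ s : ℕ, η ≤ ent (msaS^[s] x) (n - 1)) (i : Fin n) (j : Fin (n + 1)) :
    Tendsto (fun s : ℕ => msaBeta n x s i.succ j / msaBeta n x s 0 j) atTop (nhds (x i)) := by
  obtain _ | n := n
  · exact i.elim0
  simp only [Nat.add_sub_cancel, ent_last] at hle
  have hpos (s) : 0 < (msaS^[s] x) (Fin.last n) := hη.trans_le (hle s)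
  have hB := iterate_msaS_mem_Bset hx hpos
  have hdigit (s) : 1 ≤ msaDigit (msaS^[s] x) :=
    one_le_msaDigit (hpos s) (mem_Icc_of_mem_Bset (hB s) (Fin.last n)).2
  have heigen (s) :
      selmerBeta (n + 1) (msaDigit (msaS^[s] x)) *ᵥ scaledOrbit x (s + 1) = scaledOrbit x s :=
    selmerBeta_mulVec_scaledOrbit (apply_zero_pos_of_mem_Bset (hB s) (hpos s)).ne'
  simp only [msaBeta_eq_blockProd]
  simpa [scaledOrbit] using tendsto_blockProd_div_of_isPrimitive (selmerBeta_isPrimitive one_pos)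
    (fun s => selmerBeta_mono (hdigit s)) (scaledOrbit_pos hx hpos) heigen (pow_pos hη 2)
    (sq_mul_scaledOrbit_le hx hη hle) 0 i.succ 0 j

/-- **Weak convergence of the periodic MSA.** Let `x ∈ B^n` have MSA orbit defined for
all times and suppose its MSA expansion is eventually periodic: `S^{m+p} x = S^m x` for
some `m ≥ 0`, `p ≥ 1`. Then for every `i ∈ {1,…,n}`,
`(β^{(s)})_{i,n−1} / (β^{(s)})_{0,n−1} → x_i` as `s → ∞`. -/
theorem msa_periodic_weak_convergence (n : ℕ) (hn : 1 ≤ n) (x : Fin n → ℝ)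
    (hx : x ∈ Bset n) (horb : ∀ s : ℕ, 0 < ent (msaS^[s] x) (n - 1))
    (m p : ℕ) (hp : 1 ≤ p) (hper : msaS^[m + p] x = msaS^[m] x) :
    ∀ i : Fin n,
      Tendsto
        (fun s : ℕ => (msaBeta n x s) i.succ ⟨n - 1, by omega⟩
          / (msaBeta n x s) 0 ⟨n - 1, by omega⟩)
        atTop (nhds (x i)) := by
  obtain ⟨η, hη, hle⟩ := exists_pos_forall_le_of_iterate_eq hp hper
    (g := fun y => ent y (n - 1)) horb
  exact fun i => msa_periodic_weak_convergence_general hx hη hle i _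
end
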